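/- arXiv:2512.24701 — 2 statements merged into one kernel-verified Lean document; each statement's English description precedes it below -/
import Mathlib

section
/- The function k : (0,∞) → ℝ defined by k(φ) = log Γ(φ) − φ log φ + φ is strictly convex on (0,∞). -/
/-!
Write `k φ = log Γ(φ) - φ log φ + φ`. The functional equation of `Γ` gives `k φ = h φ + k (φ + 1)`
with `h φ = (φ + 1) (log (φ + 1) - log φ) - 1`, and `h'' φ = 1 / (φ² (φ + 1)) > 0`
(`strictConvexOn_step`), so the Jensen defect `a k(x) + b k(y) - k(a x + b y)` strictly decreases
when the points `x`, `y` are shifted by `1`. It remains to see that the limit of the defect under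
the shifts by `n → ∞` is nonnegative. The `log Γ` part of the defect is nonnegative since `Γ` is
log-convex, and the defect of `φ log φ - φ` is at most `a b (x - y) (log (x + n) - log (y + n))`
(`defect_entropy_le`), which tends to `0`. No derivative of `Γ` is needed.
-/

open Real Set
open Filter Topology

/-- The increment `k φ - k (φ + 1)` of the cumulant term is strictly convex. -/
lemma strictConvexOn_step :
    StrictConvexOn ℝ (Ioi (0:ℝ)) (fun t => (t + 1) * (log (t + 1) - log t) - 1) := by
  have hd : ∀ t ∈ Ioi (0:ℝ), HasDerivAt (fun t : ℝ => (t + 1) * (log (t + 1) - log t) - 1)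
      (log (t + 1) - log t - t⁻¹) t := by
    intro t ht
    have ht' : (0:ℝ) < t := ht
    have h1 : HasDerivAt (fun t : ℝ => t + 1) 1 t := (hasDerivAt_id t).add_const 1
    have h := (h1.mul ((h1.log (by positivity)).sub (hasDerivAt_log ht'.ne'))).sub_const 1
    refine h.congr_deriv ?_
    simp only [Pi.sub_apply]
    field_simp
    ring
  have hd2 : ∀ t ∈ Ioi (0:ℝ), HasDerivAt (fun t : ℝ => log (t + 1) - log t - t⁻¹)
      (1 / (t ^ 2 * (t + 1))) t := by
    intro t ht
    have ht' : (0:ℝ) < t := ht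
    have h1 : HasDerivAt (fun t : ℝ => t + 1) 1 t := (hasDerivAt_id t).add_const 1
    have h := ((h1.log (by positivity)).sub (hasDerivAt_log ht'.ne')).sub
      (hasDerivAt_inv ht'.ne')
    refine h.congr_deriv ?_
    field_simp
    ring
  have hmono : StrictMonoOn (fun t : ℝ => log (t + 1) - log t - t⁻¹) (Ioi 0) := by
    refine strictMonoOn_of_deriv_pos (convex_Ioi 0)
      (fun t ht => (hd2 t ht).continuousAt.continuousWithinAt) fun t ht => ?_
    rw [interior_Ioi] at ht
    rw [(hd2 t ht).deriv]
    have ht' : (0:ℝ) < t := ht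
    positivity
  refine StrictMonoOn.strictConvexOn_of_deriv (convex_Ioi 0)
    (fun t ht => (hd t ht).continuousAt.continuousWithinAt) ?_
  rw [interior_Ioi]
  exact hmono.congr fun t ht => (hd t ht).deriv.symm

/-- The tangent line inequality at `u` for the convex function `t log t - t`. -/
lemma entropy_sub_le {u v : ℝ} (hu : 0 < u) (hv : 0 < v) :
    (u * log u - u) - (v * log v - v) ≤ (u - v) * log u := by
  have h := log_le_sub_one_of_pos (div_pos hu hv)
  rw [log_div hu.ne' hv.ne'] at h
  have h2 := mul_le_mul_of_nonneg_left h hv.le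
  have h3 : v * (u / v - 1) = u - v := by field_simp
  linarith

/-- Bound on the Jensen defect of `t log t - t`: with `z = a x + b y`, the tangent line
inequalities at `x` and `y` have weights `a (x - z) = a b (x - y) = -b (y - z)`, so only the
difference of the two logarithms survives. -/
lemma defect_entropy_le {x y a b : ℝ} (hx : 0 < x) (hy : 0 < y) (ha : 0 < a) (hb : 0 < b)
    (hab : a + b = 1) :
    a * (x * log x - x) + b * (y * log y - y) -
      ((a * x + b * y) * log (a * x + b * y) - (a * x + b * y)) ≤
      a * b * (x - y) * (log x - log y) := by
  have hz : 0 < a * x + b * y := by positivity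
  have h1 := mul_le_mul_of_nonneg_left (entropy_sub_le hx hz) ha.le
  have h2 := mul_le_mul_of_nonneg_left (entropy_sub_le hy hz) hb.le
  obtain rfl : b = 1 - a := by linarith
  linarith

lemma cumulant_eq_step_add {t : ℝ} (ht : 0 < t) :
    log (Gamma t) - t * log t + t = ((t + 1) * (log (t + 1) - log t) - 1) +
      (log (Gamma (t + 1)) - (t + 1) * log (t + 1) + (t + 1)) := by
  rw [Gamma_add_one ht.ne', log_mul ht.ne' (Gamma_pos_of_pos ht).ne']
  ring

/-- The cumulant term `k(φ) = log Γ(φ) − φ log φ + φ` of the gamma regression model is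
strictly convex on `(0, ∞)` (equivalently, the trigamma function satisfies
`ψ′(φ) > 1/φ`, i.e. the Fisher information of the precision parameter is positive). -/
theorem strictConvexOn_gamma_cumulant :
    StrictConvexOn ℝ (Ioi (0:ℝ))
      (fun φ => Real.log (Real.Gamma φ) - φ * Real.log φ + φ) := by
  refine ⟨convex_Ioi 0, fun x hx y hy hxy a b ha hb hab => ?_⟩
  have hx0 : (0:ℝ) < x := hx
  have hy0 : (0:ℝ) < y := hy
  simp only [smul_eq_mul]
  set k : ℝ → ℝ := fun φ => log (Gamma φ) - φ * log φ + φ with hk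
  set h : ℝ → ℝ := fun t => (t + 1) * (log (t + 1) - log t) - 1 with hh
  have hkh : ∀ t, 0 < t → k t = h t + k (t + 1) := fun t ht => cumulant_eq_step_add ht
  have hz0 : 0 < a * x + b * y := by positivity
  have hshift : ∀ s : ℝ, a * (x + s) + b * (y + s) = a * x + b * y + s := fun s => by
    linear_combination s * hab
  -- The Jensen defect of `k` at the points shifted by `n`.
  set D : ℕ → ℝ := fun n => a * k (x + n) + b * k (y + n) - k (a * x + b * y + n) with hD
  have hDstep : ∀ n : ℕ, D n = (a * h (x + n) + b * h (y + n) - h (a * x + b * y + n)) +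
      D (n + 1) := by
    intro n
    simp only [hD]
    rw [hkh (x + n) (by positivity), hkh (y + n) (by positivity),
      hkh (a * x + b * y + n) (by positivity)]
    push_cast
    simp only [← add_assoc]
    ring
  have hDlt : ∀ n : ℕ, D (n + 1) < D n := by
    intro n
    have hc := strictConvexOn_step.2 (show x + n ∈ Ioi (0:ℝ) from by simp only [mem_Ioi]; positivity)
      (show y + n ∈ Ioi (0:ℝ) from by simp only [mem_Ioi]; positivity)
      (fun e => hxy (add_right_cancel e)) ha hb hab
    simp only [smul_eq_mul, hshift] at hc
    have := hDstep n
    simp only [hh] at this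
    linarith
  have hanti : StrictAnti D := strictAnti_nat_of_succ_lt hDlt
  have hlow : ∀ n : ℕ, -(a * b * (x - y) * (log (x + n) - log (y + n))) ≤ D n := by
    intro n
    have hxn : 0 < x + n := by positivity
    have hyn : 0 < y + n := by positivity
    have hG := convexOn_log_Gamma.2 (show x + n ∈ Ioi (0:ℝ) from hxn)
      (show y + n ∈ Ioi (0:ℝ) from hyn) ha.le hb.le hab
    have hE := defect_entropy_le hxn hyn ha hb hab
    simp only [smul_eq_mul, hshift, Function.comp_apply] at hG hE
    rw [add_sub_add_right_eq_sub] at hE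
    simp only [hD, hk]
    linarith
  have hlim : Tendsto (fun n : ℕ => -(a * b * (x - y) * (log (x + n) - log (y + n))))
      atTop (𝓝 0) := by
    have hl : ∀ s : ℝ, Tendsto (fun n : ℕ => log ((n:ℝ) + s) - log n) atTop (𝓝 0) := fun s =>
      (tendsto_log_comp_add_sub_log s).comp tendsto_natCast_atTop_atTop
    have := (((hl x).sub (hl y)).const_mul (a * b * (x - y))).neg
    simp only [sub_zero, mul_zero, neg_zero, sub_sub_sub_cancel_right] at this
    simpa only [add_comm] using this
  have hD1 : 0 ≤ D 1 := by
    refine le_of_tendsto hlim ?_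
    filter_upwards [eventually_ge_atTop 1] with n hn
    exact (hlow n).trans (hanti.antitone hn)
  have hD0 : 0 < D 0 := hD1.trans_lt (hDlt 0)
  simp only [hD, Nat.cast_zero, add_zero] at hD0
  change k (a * x + b * y) < a * k x + b * k y
  linarith
end

section
/- Let k : (0,∞) → ℝ be defined by k(φ) = log Γ(φ) − φ log φ + φ, and let k′ denote its derivative. Then for all φ, φ̂ > 0, (φ̂ − φ)·k′(φ̂) + k(φ) − k(φ̂) ≥ 0, with equality if and only if φ = φ̂. -/
/-!
The expression in the theorem is the Bregman divergence `D(x, y) = k x - k y - (x - y) k'(y)` of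
`k`, so the claim is strict convexity of `k` on `(0, ∞)`, in tangent-line form.

Convexity of `log Γ` (the easy half of Bohr-Mollerup) together with `log t ≤ t - 1` gives the crude
bound `D(x, y) ≥ -(x - y)² / y`. The functional equation of `Γ` shows that
`k x - k (x + 1) = (x + 1) log ((x + 1) / x) - 1`, and this function is strictly convex: its own
Bregman divergence is `(x + 1) (s - 1 - log s)` with `s = x (y + 1) / ((x + 1) y)`. Hence
`D(x, y) > D(x + 1, y + 1)` for `x ≠ y`. Iterating, `D(x, y) ≥ D(x + n, y + n) ≥ -(x - y)² / (y + n)`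
for every `n`, so `D ≥ 0`; one further strict step then gives `D(x, y) > 0` for `x ≠ y`.
-/

open Real

/-- The Bregman divergence of `k φ = log Γ(φ) - φ log φ + φ`, with the part coming from
`φ log φ - φ` (whose derivative is `log φ`) written out. -/
noncomputable def gammaBregman (x y : ℝ) : ℝ :=
  (log (Gamma x) - log (Gamma y) - (x - y) * deriv (fun t => log (Gamma t)) y)
    - (x * (log x - log y) - x + y)

lemma differentiableAt_log_Gamma {x : ℝ} (hx : 0 < x) :
    DifferentiableAt ℝ (fun t => log (Gamma t)) x := by
  refine DifferentiableAt.log (differentiableAt_Gamma fun m => ?_) (Gamma_pos_of_pos hx).ne'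
  have : (0 : ℝ) ≤ m := m.cast_nonneg
  linarith

lemma log_Gamma_add_one {x : ℝ} (hx : 0 < x) :
    log (Gamma (x + 1)) = log x + log (Gamma x) := by
  rw [Gamma_add_one hx.ne', log_mul hx.ne' (Gamma_pos_of_pos hx).ne']

lemma deriv_log_Gamma_add_one {x : ℝ} (hx : 0 < x) :
    deriv (fun t => log (Gamma t)) (x + 1) = x⁻¹ + deriv (fun t => log (Gamma t)) x := by
  rw [← deriv_comp_add_const]
  have h : (fun t => log (Gamma (t + 1))) =ᶠ[nhds x] fun t => log t + log (Gamma t) := by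
    filter_upwards [lt_mem_nhds hx] with t ht using log_Gamma_add_one ht
  rw [h.deriv_eq]
  exact ((hasDerivAt_log hx.ne').add (differentiableAt_log_Gamma hx).hasDerivAt).deriv

/-- Tangent-line inequality for the convex function `log Γ`. -/
lemma log_Gamma_tangent {x y : ℝ} (hx : 0 < x) (hy : 0 < y) :
    0 ≤ log (Gamma x) - log (Gamma y) - (x - y) * deriv (fun t => log (Gamma t)) y := by
  have hc : ConvexOn ℝ (Set.Ioi 0) (fun t => log (Gamma t)) := convexOn_log_Gamma
  have hd := differentiableAt_log_Gamma hy
  rcases lt_trichotomy x y with h | h | h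
  · have := hc.slope_le_deriv hx hy h hd
    rw [slope_def_field, div_le_iff₀ (by linarith)] at this
    linarith
  · subst h; simp
  · have := hc.deriv_le_slope hy hx h hd
    rw [slope_def_field, le_div_iff₀ (by linarith)] at this
    linarith

lemma gammaBregman_lower {x y : ℝ} (hx : 0 < x) (hy : 0 < y) :
    -((x - y) ^ 2 / y) ≤ gammaBregman x y := by
  have h1 := log_Gamma_tangent hx hy
  have h2 := log_le_sub_one_of_pos (div_pos hx hy)
  rw [log_div hx.ne' hy.ne'] at h2
  have h3 := mul_le_mul_of_nonneg_left h2 hx.le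
  have h4 : x * (x / y - 1) - x + y = (x - y) ^ 2 / y := by field_simp; ring
  unfold gammaBregman
  linarith

/-- The difference of consecutive divergences is the divergence of
`x ↦ (x + 1) log ((x + 1) / x) - 1`. -/
lemma gammaBregman_sub_succ {x y : ℝ} (hx : 0 < x) (hy : 0 < y) :
    gammaBregman x y - gammaBregman (x + 1) (y + 1) =
      (x + 1) * (x * (y + 1) / ((x + 1) * y) - 1 - log (x * (y + 1) / ((x + 1) * y))) := by
  have hx1 : 0 < x + 1 := by linarith
  have hy1 : 0 < y + 1 := by linarith
  have h : (x + 1) * (x * (y + 1) / ((x + 1) * y) - 1) = (x - y) * y⁻¹ := by field_simp; ring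
  rw [mul_sub, h, log_div (by positivity) (by positivity), log_mul hx.ne' hy1.ne',
    log_mul hx1.ne' hy.ne']
  unfold gammaBregman
  rw [log_Gamma_add_one hx, log_Gamma_add_one hy, deriv_log_Gamma_add_one hy]
  ring

lemma gammaBregman_succ_lt {x y : ℝ} (hx : 0 < x) (hy : 0 < y) (hxy : x ≠ y) :
    gammaBregman (x + 1) (y + 1) < gammaBregman x y := by
  have h := gammaBregman_sub_succ hx hy
  have hne : x * (y + 1) / ((x + 1) * y) ≠ 1 := by
    rw [Ne, div_eq_one_iff_eq (by positivity)]
    intro h'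
    apply hxy
    linarith
  have h2 := log_lt_sub_one_of_pos (by positivity) hne
  have h3 : 0 < (x + 1) *
      (x * (y + 1) / ((x + 1) * y) - 1 - log (x * (y + 1) / ((x + 1) * y))) :=
    mul_pos (by linarith) (by linarith)
  linarith

lemma gammaBregman_add_nat_le {x y : ℝ} (hx : 0 < x) (hy : 0 < y) (hxy : x ≠ y) (n : ℕ) :
    gammaBregman (x + n) (y + n) ≤ gammaBregman x y := by
  induction n with
  | zero => simp
  | succ n ih =>
    have h := gammaBregman_succ_lt (x := x + n) (y := y + n) (by positivity) (by positivity)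
      (by simpa using hxy)
    push_cast
    rw [← add_assoc, ← add_assoc]
    linarith

lemma gammaBregman_nonneg {x y : ℝ} (hx : 0 < x) (hy : 0 < y) (hxy : x ≠ y) :
    0 ≤ gammaBregman x y := by
  have hlim : Filter.Tendsto (fun n : ℕ => -((x - y) ^ 2 / (y + n))) Filter.atTop (nhds 0) := by
    rw [← neg_zero]
    exact (Filter.Tendsto.const_div_atTop
      (Filter.tendsto_atTop_add_const_left _ y tendsto_natCast_atTop_atTop) _).neg
  refine le_of_tendsto' hlim fun n => ?_
  have h := gammaBregman_lower (x := x + n) (y := y + n) (by positivity) (by positivity)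
  rw [add_sub_add_right_eq_sub] at h
  exact h.trans (gammaBregman_add_nat_le hx hy hxy n)

lemma gammaBregman_pos {x y : ℝ} (hx : 0 < x) (hy : 0 < y) (hxy : x ≠ y) :
    0 < gammaBregman x y :=
  (gammaBregman_nonneg (x := x + 1) (y := y + 1) (by linarith) (by linarith)
    (by simpa using hxy)).trans_lt (gammaBregman_succ_lt hx hy hxy)

/-- Nonnegativity of the profile deviance of the precision parameter in the gamma
regression model: for `k(φ) = log Γ(φ) − φ log φ + φ`,
`(φ̂ − φ)·k′(φ̂) + k(φ) − k(φ̂) ≥ 0`, with equality iff `φ = φ̂`. -/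
theorem gamma_profile_deviance_nonneg
    (k : ℝ → ℝ) (hk : ∀ φ, k φ = Real.log (Real.Gamma φ) - φ * Real.log φ + φ) :
    ∀ φ φhat : ℝ, 0 < φ → 0 < φhat →
      0 ≤ (φhat - φ) * deriv k φhat + k φ - k φhat ∧
      ((φhat - φ) * deriv k φhat + k φ - k φhat = 0 ↔ φ = φhat) := by
  intro x y hx hy
  have hderiv : deriv k y = deriv (fun t => log (Gamma t)) y - log y := by
    have h := ((differentiableAt_log_Gamma hy).hasDerivAt.sub (hasDerivAt_mul_log hy.ne')).add
      (hasDerivAt_id y)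
    rw [funext hk]
    refine (HasDerivAt.deriv h).trans ?_
    ring
  have hB : (y - x) * deriv k y + k x - k y = gammaBregman x y := by
    rw [hderiv, hk, hk, gammaBregman]
    ring
  rw [hB]
  by_cases hxy : x = y
  · subst hxy
    simp [gammaBregman]
  · have hpos := gammaBregman_pos hx hy hxy
    exact ⟨hpos.le, fun h => absurd h hpos.ne', fun h => absurd h hxy⟩
end
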